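/- Let $k \ge 1$ and let $H_1$ and $H_2$ be two $k$-uniform hypergraphs, each on $n$ vertices. For $l \ge 0$ let $\Delta_l(H)$ denote the maximum, over all $l$-element sets $U$ of vertices of $H$, of the number of edges of $H$ containing $U$ (with $\Delta_l(H)=0$ if $H$ has fewer than $l$ vertices), and let $\Delta(H)=\Delta_1(H)$. If $$\Delta(H_1)\,\Delta_{k-1}(H_2)+\Delta(H_2)\,\Delta_{k-1}(H_1) < n-k+2,$$ then $H_1$ and $H_2$ pack, that is, there is a bijection $f : V(H_1) \to V(H_2)$ such that $f(e) \notin E(H_2)$ for every edge $e \in E(H_1)$. -/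

import Mathlib

/-- A family of edges is `k`-uniform if every edge has exactly `k` vertices. -/
def Uniform (k : ℕ) {V : Type*} (E : Finset (Finset V)) : Prop :=
  ∀ e ∈ E, e.card = k

/-- Two hypergraphs (given by their edge sets) pack if there is a bijection of the
vertex sets mapping every edge of the first to a non-edge of the second. -/
def Packs {V₁ V₂ : Type*} [DecidableEq V₂]
    (E₁ : Finset (Finset V₁)) (E₂ : Finset (Finset V₂)) : Prop :=
  ∃ f : V₁ ≃ V₂, ∀ e ∈ E₁, e.image f ∉ E₂

/-- The degree of a vertex subset `U`: the number of edges containing `U`. -/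
def setDeg {V : Type*} [DecidableEq V] (E : Finset (Finset V)) (U : Finset V) : ℕ :=
  (E.filter fun e => U ⊆ e).card

/-- `maxDeg l E` is `Δ_l(H)`: the maximum degree of an `l`-element vertex subset
(it is `0` if there are fewer than `l` vertices). -/
def maxDeg {V : Type*} [Fintype V] [DecidableEq V] (l : ℕ) (E : Finset (Finset V)) : ℕ :=
  (Finset.univ.powersetCard l).sup (setDeg E)

theorem setDeg_le_maxDeg {V : Type*} [Fintype V] [DecidableEq V] (E : Finset (Finset V))
    {l : ℕ} {U : Finset V} (hU : U.card = l) : setDeg E U ≤ maxDeg l E :=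
  Finset.le_sup (f := setDeg E) (Finset.mem_powersetCard.2 ⟨Finset.subset_univ U, hU⟩)

/-- The number of vertices `v` completing the set `S` to a set whose image is an edge is at most
the degree of the image of `S`. -/
theorem card_completions_le {V₁ V₂ : Type*} [Fintype V₁] [DecidableEq V₁] [Fintype V₂]
    [DecidableEq V₂] (E₂ : Finset (Finset V₂)) (f : V₁ ≃ V₂) (S : Finset V₁) :
    (Finset.univ.filter fun v => v ∉ S ∧ (insert v S).image f ∈ E₂).card
      ≤ maxDeg S.card E₂ := by
  refine le_trans ?_ (setDeg_le_maxDeg E₂ (Finset.card_image_of_injective S f.injective))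
  refine Finset.card_le_card_of_injOn (fun v => (insert v S).image f) ?_ ?_
  · intro v hv
    have hv := (Finset.mem_filter.1 (Finset.mem_coe.1 hv)).2
    exact Finset.mem_coe.2 (Finset.mem_filter.2
      ⟨hv.2, Finset.image_subset_image (Finset.subset_insert v S)⟩)
  · intro v hv w _ hvw
    have hv := (Finset.mem_filter.1 (Finset.mem_coe.1 hv)).2
    have heq : insert v S = insert w S := Finset.image_injective f.injective hvw
    have hmem : v ∈ insert w S := heq ▸ Finset.mem_insert_self v S
    exact (Finset.mem_insert.1 hmem).resolve_right hv.1

/-- The vertices `v ∉ e` for which exchanging `u ∈ e` with `v` moves some edge containing `u` but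
not `v` onto an edge of the second hypergraph. -/
def exchangeConflicts {V₁ V₂ : Type*} [Fintype V₁] [DecidableEq V₁] [DecidableEq V₂]
    (E₁ : Finset (Finset V₁)) (E₂ : Finset (Finset V₂)) (f : V₁ ≃ V₂) (e : Finset V₁) (u : V₁) :
    Finset V₁ :=
  Finset.univ.filter fun v => v ∉ e ∧
    ∃ e' ∈ E₁, u ∈ e' ∧ v ∉ e' ∧ (insert v (e'.erase u)).image f ∈ E₂

theorem card_exchangeConflicts_lt {V₁ V₂ : Type*} [Fintype V₁] [DecidableEq V₁] [Fintype V₂]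
    [DecidableEq V₂] {k : ℕ} {E₁ : Finset (Finset V₁)} {E₂ : Finset (Finset V₂)}
    (h₁ : Uniform k E₁) (f : V₁ ≃ V₂) {e : Finset V₁} (he₁ : e ∈ E₁) (he₂ : e.image f ∈ E₂)
    {u : V₁} (hu : u ∈ e) :
    (exchangeConflicts E₁ E₂ f e u).card < maxDeg 1 E₁ * maxDeg (k - 1) E₂ := by
  have hnot : u ∉ exchangeConflicts E₁ E₂ f e u := fun h =>
    (Finset.mem_filter.1 h).2.1 hu
  have hsub : insert u (exchangeConflicts E₁ E₂ f e u) ⊆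
      (E₁.filter fun e' => {u} ⊆ e').biUnion fun e' =>
        Finset.univ.filter fun v => v ∉ e'.erase u ∧ (insert v (e'.erase u)).image f ∈ E₂ := by
    intro v hv
    rw [Finset.mem_biUnion]
    rcases Finset.mem_insert.1 hv with rfl | hv
    · refine ⟨e, Finset.mem_filter.2 ⟨he₁, Finset.singleton_subset_iff.2 hu⟩,
        Finset.mem_filter.2 ⟨Finset.mem_univ _, Finset.notMem_erase _ _, ?_⟩⟩
      rwa [Finset.insert_erase hu]
    · obtain ⟨_, e', he', hue', hve', himg⟩ := (Finset.mem_filter.1 hv).2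
      exact ⟨e', Finset.mem_filter.2 ⟨he', Finset.singleton_subset_iff.2 hue'⟩,
        Finset.mem_filter.2 ⟨Finset.mem_univ _, fun h => hve' (Finset.mem_of_mem_erase h), himg⟩⟩
  have hcard := Finset.card_le_card hsub
  rw [Finset.card_insert_of_notMem hnot] at hcard
  refine hcard.trans ((Finset.card_biUnion_le_card_mul _ _ (maxDeg (k - 1) E₂) ?_).trans
    (Nat.mul_le_mul_right _ (setDeg_le_maxDeg E₁ (Finset.card_singleton u))))
  intro e' he'
  obtain ⟨he', hue'⟩ := Finset.mem_filter.1 he'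
  have := card_completions_le E₂ f (e'.erase u)
  rwa [Finset.card_erase_of_mem (Finset.singleton_subset_iff.1 hue'), h₁ e' he'] at this

theorem image_swap_eq_insert_erase {V : Type*} [DecidableEq V] {s : Finset V} {u v : V}
    (hu : u ∈ s) (hv : v ∉ s) : s.image (Equiv.swap u v) = insert v (s.erase u) := by
  conv_lhs => rw [← Finset.insert_erase hu]
  rw [Finset.image_insert, Equiv.swap_apply_left]
  congr 1
  have : Set.EqOn (Equiv.swap u v) id (s.erase u) := fun x hx => by
    obtain ⟨hxu, hxs⟩ := Finset.mem_erase.1 (Finset.mem_coe.1 hx)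
    exact Equiv.swap_apply_of_ne_of_ne hxu fun h => hv (h ▸ hxs)
  rw [Finset.image_congr this, Finset.image_id]

theorem image_swap_eq_self {V : Type*} [DecidableEq V] {s : Finset V} {u v : V}
    (h : u ∈ s ↔ v ∈ s) : s.image (Equiv.swap u v) = s := by
  refine Finset.eq_of_subset_of_card_le (fun x hx => ?_)
    (Finset.card_image_of_injective s (Equiv.swap u v).injective).ge
  obtain ⟨y, hy, rfl⟩ := Finset.mem_image.1 hx
  rw [Equiv.swap_apply_def]
  split_ifs with h1 h2
  · exact h.1 (h1 ▸ hy)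
  · exact h.2 (h2 ▸ hy)
  · exact hy

/-- The edges of the first hypergraph that `f` maps onto edges of the second. -/
def conflicts {V₁ V₂ : Type*} [DecidableEq V₂] (E₁ : Finset (Finset V₁)) (E₂ : Finset (Finset V₂))
    (f : V₁ ≃ V₂) : Finset (Finset V₁) :=
  E₁.filter fun e => e.image f ∈ E₂

/-- Under the degree condition a bijection with a conflict can be improved by a transposition. -/
theorem exists_card_conflicts_lt {V₁ V₂ : Type*} [Fintype V₁] [DecidableEq V₁] [Fintype V₂]
    [DecidableEq V₂] {k : ℕ} (hk : 1 ≤ k) {E₁ : Finset (Finset V₁)} {E₂ : Finset (Finset V₂)}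
    (h₁ : Uniform k E₁) (h₂ : Uniform k E₂)
    (h : maxDeg 1 E₁ * maxDeg (k - 1) E₂ + maxDeg 1 E₂ * maxDeg (k - 1) E₁ + k <
      Fintype.card V₁ + 2)
    (f : V₁ ≃ V₂) (hf : (conflicts E₁ E₂ f).Nonempty) :
    ∃ g : V₁ ≃ V₂, (conflicts E₁ E₂ g).card < (conflicts E₁ E₂ f).card := by
  obtain ⟨e, he⟩ := hf
  obtain ⟨he₁, he₂⟩ := Finset.mem_filter.1 he
  obtain ⟨u, hu⟩ : e.Nonempty := Finset.card_pos.1 (by rw [h₁ e he₁]; exact hk)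
  have himg : (e.image f).image f.symm = e := by
    rw [Finset.image_image, Equiv.symm_comp_self, Finset.image_id]
  have hA := card_exchangeConflicts_lt h₁ f he₁ he₂ hu
  have hB := card_exchangeConflicts_lt (E₂ := E₁) h₂ f.symm he₂ (by rwa [himg])
    (Finset.mem_image_of_mem f hu)
  set A := exchangeConflicts E₁ E₂ f e u
  set B := exchangeConflicts E₂ E₁ f.symm (e.image f) (f u)
  have hcard : (A ∪ B.image f.symm).card < eᶜ.card := by
    have h3 := Finset.card_union_le A (B.image f.symm)
    have h4 : (B.image f.symm).card ≤ B.card := Finset.card_image_le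
    rw [Finset.card_compl, h₁ e he₁]
    omega
  obtain ⟨v, hve, hvAB⟩ := Finset.exists_mem_notMem_of_card_lt_card hcard
  rw [Finset.mem_compl] at hve
  rw [Finset.mem_union, not_or] at hvAB
  obtain ⟨hvA, hvB⟩ := hvAB
  have himage : ∀ s : Finset V₁, s.image ((Equiv.swap u v).trans f) =
      (s.image (Equiv.swap u v)).image f := fun s => by
    rw [Finset.image_image, Equiv.coe_trans]
  have hout : ∀ e' ∈ E₁, u ∈ e' → v ∉ e' → e'.image ((Equiv.swap u v).trans f) ∉ E₂ := by
    intro e' he' hue' hve' hmem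
    rw [himage, image_swap_eq_insert_erase hue' hve'] at hmem
    exact hvA (Finset.mem_filter.2 ⟨Finset.mem_univ _, hve, e', he', hue', hve', hmem⟩)
  have hin : ∀ e' ∈ E₁, u ∉ e' → v ∈ e' → e'.image ((Equiv.swap u v).trans f) ∉ E₂ := by
    intro e' he' hue' hve' hmem
    rw [himage, Equiv.swap_comm, image_swap_eq_insert_erase hve' hue'] at hmem
    have huv : u ≠ v := fun h => hue' (h ▸ hve')
    refine hvB (Finset.mem_image.2 ⟨f v, Finset.mem_filter.2 ⟨Finset.mem_univ _, ?_,
      _, hmem, Finset.mem_image_of_mem f (Finset.mem_insert_self _ _), ?_, ?_⟩,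
      f.symm_apply_apply v⟩)
    · rwa [f.injective.mem_finset_image]
    · rw [f.injective.mem_finset_image, Finset.mem_insert]
      rintro (h | h)
      · exact huv h.symm
      · exact Finset.notMem_erase _ _ h
    · rw [← Finset.image_erase f.injective, Finset.erase_insert (fun h =>
        hue' (Finset.mem_of_mem_erase h)), ← Finset.image_insert, Finset.insert_erase hve',
        Finset.image_image, Equiv.symm_comp_self, Finset.image_id]
      exact he'
  refine ⟨(Equiv.swap u v).trans f, Finset.card_lt_card
    (Finset.ssubset_iff_of_subset ?_ |>.2 ⟨e, he, ?_⟩)⟩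
  · intro e' he'
    obtain ⟨he', hmem⟩ := Finset.mem_filter.1 he'
    refine Finset.mem_filter.2 ⟨he', ?_⟩
    have hiff : u ∈ e' ↔ v ∈ e' :=
      ⟨fun hx => by_contra fun hy => hout e' he' hx hy hmem,
        fun hy => by_contra fun hx => hin e' he' hx hy hmem⟩
    rwa [himage, image_swap_eq_self hiff] at hmem
  · exact fun hmem => hout e he₁ hu hve (Finset.mem_filter.1 hmem).2

/-- If `Δ(H₁)·Δ_{k−1}(H₂) + Δ(H₂)·Δ_{k−1}(H₁) < n − k + 2`, `k ≥ 1`, then the two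
`k`-uniform hypergraphs on `n` vertices pack. -/
theorem stmt_6 {V₁ V₂ : Type*} [Fintype V₁] [DecidableEq V₁] [Fintype V₂] [DecidableEq V₂]
    (k n : ℕ) (hk : 1 ≤ k) (hV₁ : Fintype.card V₁ = n) (hV₂ : Fintype.card V₂ = n)
    (E₁ : Finset (Finset V₁)) (E₂ : Finset (Finset V₂))
    (h₁ : Uniform k E₁) (h₂ : Uniform k E₂)
    (h : ((maxDeg 1 E₁ * maxDeg (k - 1) E₂ + maxDeg 1 E₂ * maxDeg (k - 1) E₁ : ℕ) : ℤ) <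
      (n : ℤ) - (k : ℤ) + 2) :
    Packs E₁ E₂ := by
  have : Nonempty (V₁ ≃ V₂) := Fintype.card_eq.1 (hV₁.trans hV₂.symm)
  obtain ⟨f, hf⟩ := Finite.exists_min fun f : V₁ ≃ V₂ => (conflicts E₁ E₂ f).card
  refine ⟨f, fun e he₁ he₂ => ?_⟩
  obtain ⟨g, hg⟩ := exists_card_conflicts_lt hk h₁ h₂ (by omega) f
    ⟨e, Finset.mem_filter.2 ⟨he₁, he₂⟩⟩
  exact (hf g).not_gt hg
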